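/- arXiv:2211.03315 — 3 statements merged into one kernel-verified Lean document; each statement's English description precedes it below -/
import Mathlib

section
/- Let k be a perfect field of characteristic p > 0, let R(1), ..., R(n) be standard graded rings over k with Krull dimensions d_1, ..., d_n all at least 2, and for each i let I(i) be a homogeneous ideal of R(i) of finite colength. Let T = R(1) ⊗_k ... ⊗_k R(n) with its induced grading, let d = d_1 + ... + d_n (= dim T), and let I(1) ⊠ ... ⊠ I(n) denote the ideal of T generated by the images of all the I(i) under the canonical inclusions R(i) → T. Suppose that for each i the sequence of normalized Hilbert functions f_m(R(i), I(i)) converges uniformly on [0,∞) to a compactly supported continuous function f_i, and that the sequence f_m(T, I(1) ⊠ ... ⊠ I(n)) (defined with normalization q^{1-d}) converges uniformly on [0,∞) to a compactly supported continuous function h. Extending all these functions by 0 to (-∞, 0], one has h = f_1 * f_2 * ... * f_n, the n-fold convolution. -/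
/-!
Write `q = p ^ m`. In characteristic `p` the map `a ↦ a ^ q` is additive, so the Frobenius power of
`I(1) ⊠ ⋯ ⊠ I(n)` is generated by the images of the `I(i)^{[q]}`
(`frobeniusPower_iSup_map`), and `T / (I(1) ⊠ ⋯ ⊠ I(n))^{[q]}` is the tensor product of the graded
rings `R(i) / I(i)^{[q]}`. Bases of the factors adapted to their gradings then show that its Hilbert
function is the discrete convolution of those of the factors; this is
`quotPieceDim_piTensorPiece`, where the convolution is packaged as a coefficient of a product of
power series.

The normalizing factor satisfies `q ^ (1 - ∑ dᵢ) = ∏ q ^ (1 - dᵢ) · q ^ (-(n - 1))` for `n` factors,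
so each of the `n - 1` discrete convolutions carries a factor `1 / q` and is the integral of a step
function, with step length `1 / q`. By dominated convergence it tends to the continuous convolution
(`ScaledLimit.conv`). To iterate this, uniform convergence is replaced by the weaker notion
`ScaledLimit` (local uniform boundedness, and convergence along every sequence `N m / q m → x`),
which passes to convolutions without any discussion of regularity. The limit `h` and the iterated
convolution are then limits of the same sequence at every point.
-/

open scoped TensorProduct
open Filter MeasureTheory

/-- The Frobenius power `I^{[q]}`: the ideal generated by `q`-th powers of elements of `I`. -/
noncomputable def frobeniusPower {A : Type*} [CommRing A] (I : Ideal A) (q : ℕ) : Ideal A :=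
  Ideal.span ((fun a => a ^ q) '' (I : Set A))

/-- A grading `𝒜` on a commutative `k`-algebra `R` is standard if `𝒜 0 = k·1`, the degree-one
piece is finitely generated, and `𝒜 (m+1) = 𝒜 1 * 𝒜 m` for all `m`. -/
structure IsStandardGraded (k : Type*) {R : Type*} [Field k] [CommRing R] [Algebra k R]
    (𝒜 : ℕ → Submodule k R) : Prop where
  degree_zero : 𝒜 0 = 1
  fg_one : (𝒜 1).FG
  succ_eq : ∀ m : ℕ, 𝒜 (m + 1) = 𝒜 1 * 𝒜 m

/-- `dim_k` of the degree piece `P` of the quotient by `I`: the dimension of the image of `P`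
in `A ⧸ I`. -/
noncomputable def quotPieceDim (k : Type*) [Field k] {A : Type*} [CommRing A] [Algebra k A]
    (P : Submodule k A) (I : Ideal A) : ℕ :=
  Module.finrank k (P.map (Ideal.Quotient.mkₐ k I).toLinearMap)

/-- The normalized Hilbert function `x ↦ q^{1-d} · dim_k (A/I^{[q]})_{⌊qx⌋}`, extended by `0`
to the negative reals. -/
noncomputable def normHilb (k : Type*) [Field k] {A : Type*} [CommRing A] [Algebra k A]
    (P : ℕ → Submodule k A) (I : Ideal A) (d q : ℕ) : ℝ → ℝ :=
  fun x => if x < 0 then 0 else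
    (q : ℝ) ^ ((1 : ℤ) - (d : ℤ)) * quotPieceDim k (P ⌊(q : ℝ) * x⌋₊) (frobeniusPower I q)

/-- The degree-`m` piece of the induced grading on `R(1) ⊗_k ⋯ ⊗_k R(n)`: the sum, over all
tuples `c` with `Σᵢ cᵢ = m`, of the spans of the elementary tensors `⊗ᵢ xᵢ` with
`xᵢ ∈ 𝒜 i (cᵢ)`. -/
noncomputable def piTensorPiece (k : Type*) [Field k] {n : ℕ} {R : Fin n → Type*}
    [∀ i, CommRing (R i)] [∀ i, Algebra k (R i)] (𝒜 : ∀ i, ℕ → Submodule k (R i)) (m : ℕ) :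
    Submodule k (⨂[k] i, R i) :=
  ⨆ (c : Fin n → ℕ) (_ : ∑ i, c i = m),
    Submodule.span k
      {t : ⨂[k] i, R i |
        ∃ x : ∀ i, R i, (∀ i, x i ∈ 𝒜 i (c i)) ∧ t = PiTensorProduct.tprod k x}

/-- `I(1) ⊠ ⋯ ⊠ I(n)`: the ideal of `R(1) ⊗_k ⋯ ⊗_k R(n)` generated by the images of all the
`I(i)` under the canonical inclusions `R(i) → ⨂ᵢ R(i)`. -/
noncomputable def piBoxIdeal (k : Type*) [Field k] {n : ℕ} {R : Fin n → Type*}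
    [∀ i, CommRing (R i)] [∀ i, Algebra k (R i)] (I : ∀ i, Ideal (R i)) :
    Ideal (⨂[k] i, R i) :=
  ⨆ i, (I i).map (PiTensorProduct.singleAlgHom (R := k) (A := R) i)

/-- Convolution of two real functions: `(f*g)(x) = ∫_ℝ f(y) g(x−y) dy`. -/
noncomputable def convolution (f g : ℝ → ℝ) : ℝ → ℝ := fun x => ∫ y : ℝ, f y * g (x - y)

/-- The `n`-fold convolution `f 0 * f 1 * ⋯ * f n` of a family of real functions. -/
noncomputable def convFold : {n : ℕ} → (Fin (n + 1) → ℝ → ℝ) → ℝ → ℝ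
  | 0, f => f 0
  | (_ + 1), f => convolution (convFold (Fin.init f)) (f (Fin.last _))

/-! ### Frobenius powers in characteristic `p` -/

/-- In characteristic `p` the additivity of `a ↦ a ^ (p ^ m)` makes the Frobenius power commute
with extending ideals and taking sums, so `(I(1) ⊠ ⋯ ⊠ I(n))^{[q]}` is generated by the images of
the `I(i)^{[q]}`. -/
lemma frobeniusPower_iSup_map {ι B : Type*} {A : ι → Type*} [∀ i, CommRing (A i)] [CommRing B]
    (φ : ∀ i, A i →+* B) (I : ∀ i, Ideal (A i)) (p m : ℕ) [ExpChar B p] :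
    frobeniusPower (⨆ i, (I i).map (φ i)) (p ^ m) =
      ⨆ i, (frobeniusPower (I i) (p ^ m)).map (φ i) := by
  apply le_antisymm
  · rw [frobeniusPower, Ideal.span_le]
    rintro _ ⟨a, ha, rfl⟩
    have key : (⨆ i, (I i).map (φ i)) ≤
        (⨆ i, (frobeniusPower (I i) (p ^ m)).map (φ i)).comap (iterateFrobenius B p m) := by
      refine iSup_le fun i => Ideal.map_le_iff_le_comap.2 fun x hx => ?_
      refine Ideal.mem_iSup_of_mem i ?_
      rw [iterateFrobenius_def, ← map_pow]
      exact Ideal.mem_map_of_mem _ (Ideal.subset_span ⟨x, hx, rfl⟩)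
    exact key ha
  · refine iSup_le fun i => ?_
    rw [frobeniusPower, Ideal.map_span, Ideal.span_le]
    rintro _ ⟨_, ⟨x, hx, rfl⟩, rfl⟩
    refine Ideal.subset_span ⟨φ i x, ?_, (map_pow _ _ _).symm⟩
    exact Ideal.mem_iSup_of_mem i (Ideal.mem_map_of_mem _ hx)

/-- In characteristic `p` the `q`-th powers of homogeneous generators of `I` already generate
`I^{[q]}`. -/
lemma frobeniusPower_isHomogeneous {k A : Type*} [Field k] [CommRing A] [Algebra k A]
    (𝒜 : ℕ → Submodule k A) [GradedAlgebra 𝒜] (I : Ideal A) (hI : I.IsHomogeneous 𝒜)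
    (p m : ℕ) [ExpChar A p] : (frobeniusPower I (p ^ m)).IsHomogeneous 𝒜 := by
  obtain ⟨S, hS⟩ := (Ideal.IsHomogeneous.iff_exists 𝒜 I).1 hI
  have : frobeniusPower I (p ^ m) =
      Ideal.span ((fun a => a ^ p ^ m) '' ((↑) '' S : Set A)) := by
    apply le_antisymm
    · rw [frobeniusPower, Ideal.span_le]
      rintro _ ⟨a, ha, rfl⟩
      have key : I ≤ (Ideal.span ((fun a => a ^ p ^ m) '' ((↑) '' S : Set A))).comap
          (iterateFrobenius A p m) := by
        rw [hS, Ideal.span_le]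
        intro x hx
        exact Ideal.subset_span ⟨x, hx, rfl⟩
      exact key ha
    · rw [frobeniusPower]
      refine Ideal.span_mono (Set.image_mono ?_)
      rw [hS]
      exact Ideal.subset_span
  rw [this]
  refine Ideal.homogeneous_span 𝒜 _ ?_
  rintro _ ⟨_, ⟨⟨x, j, hj⟩, -, rfl⟩, rfl⟩
  exact ⟨_, SetLike.pow_mem_graded (p ^ m) hj⟩

/-! ### The grading on a quotient and on a tensor product -/

/-- The quotient by a homogeneous ideal is the direct sum of the images of the graded pieces. -/
lemma isInternal_map_mk {k A : Type*} [Field k] [CommRing A] [Algebra k A]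
    (𝒜 : ℕ → Submodule k A) [GradedAlgebra 𝒜] (J : Ideal A) (hJ : J.IsHomogeneous 𝒜) :
    DirectSum.IsInternal (fun j => (𝒜 j).map (Ideal.Quotient.mkₐ k J).toLinearMap) := by
  have hint := (DirectSum.isInternal_submodule_iff_iSupIndep_and_iSup_eq_top 𝒜).1
    (DirectSum.Decomposition.isInternal 𝒜)
  rw [DirectSum.isInternal_submodule_iff_iSupIndep_and_iSup_eq_top]
  constructor
  · intro j
    rw [Submodule.disjoint_def]
    rintro x ⟨a, ha, rfl⟩ hx
    simp only [← Submodule.map_iSup] at hx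
    obtain ⟨b, hb, hab⟩ := hx
    have hb0 : GradedRing.proj 𝒜 j b = 0 := by
      have : (⨆ i, ⨆ (_ : i ≠ j), 𝒜 i) ≤
          (LinearMap.ker ((𝒜 j).subtype ∘ₗ DirectSum.component k ℕ (fun i => 𝒜 i) j ∘ₗ
            (DirectSum.decomposeLinearEquiv 𝒜).toLinearMap)) := by
        refine iSup₂_le fun i hi y hy => ?_
        rw [LinearMap.mem_ker]
        exact DirectSum.decompose_of_mem_ne 𝒜 hy hi
      exact this hb
    have hmem : a - b ∈ J := by
      rw [← Ideal.Quotient.eq]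
      exact hab.symm
    have := hJ j hmem
    rw [← GradedRing.proj_apply, map_sub, hb0, sub_zero, GradedRing.proj_apply,
      DirectSum.decompose_of_mem_same 𝒜 ha] at this
    exact Ideal.Quotient.eq_zero_iff_mem.2 this
  · rw [← Submodule.map_iSup, hint.2, Submodule.map_top, LinearMap.range_eq_top]
    exact Ideal.Quotient.mk_surjective

lemma finite_piece {k A : Type*} [Field k] [CommRing A] [Algebra k A]
    {𝒜 : ℕ → Submodule k A} (h : IsStandardGraded k 𝒜) (j : ℕ) : (𝒜 j).FG := by
  induction j with
  | zero => rw [h.degree_zero]; rw [Submodule.one_eq_span]; exact Submodule.fg_span_singleton 1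
  | succ j ih => rw [h.succ_eq]; exact h.fg_one.mul ih

section Tensor

variable {k : Type*} [Field k] {n : ℕ} {R : Fin n → Type*}
  [∀ i, CommRing (R i)] [∀ i, Algebra k (R i)]

/-- The tensor product of the quotient maps `R(i) → R(i)/J(i)`. -/
noncomputable def piQuot (J : ∀ i, Ideal (R i)) : (⨂[k] i, R i) →ₗ[k] ⨂[k] i, (R i ⧸ J i) :=
  PiTensorProduct.map fun i => (Ideal.Quotient.mkₐ k (J i)).toLinearMap

/-- The algebra map `⨂ᵢ R(i)/J(i) → (⨂ᵢ R(i))/(⊠ᵢ J(i))` given by the universal property of the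
tensor product. -/
noncomputable def piQuotInv (J : ∀ i, Ideal (R i)) :
    (⨂[k] i, (R i ⧸ J i)) →ₗ[k] (⨂[k] i, R i) ⧸ piBoxIdeal k J :=
  PiTensorProduct.lift ((MultilinearMap.mkPiAlgebra k (Fin n) _).compLinearMap fun i =>
    (Ideal.Quotient.liftₐ (J i)
      ((Ideal.Quotient.mkₐ k (piBoxIdeal k J)).comp (PiTensorProduct.singleAlgHom i))
      fun a ha => by
        refine Ideal.Quotient.eq_zero_iff_mem.2 ?_
        exact Ideal.mem_iSup_of_mem i (Ideal.mem_map_of_mem _ ha)).toLinearMap)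

lemma tprod_eq_prod_single {A : Fin n → Type*} [∀ i, CommRing (A i)] [∀ i, Algebra k (A i)]
    (x : ∀ i, A i) :
    PiTensorProduct.tprod k x = ∏ i, PiTensorProduct.singleAlgHom (R := k) i (x i) := by
  have := PiTensorProduct.tprod_prod (R := k) Finset.univ (fun i => MonoidHom.mulSingle A i (x i))
  rw [show ∏ i, MonoidHom.mulSingle A i (x i) = x from Finset.univ_prod_mulSingle x] at this
  exact this

lemma piQuotInv_comp (J : ∀ i, Ideal (R i)) :
    piQuotInv J ∘ₗ piQuot J = (Ideal.Quotient.mkₐ k (piBoxIdeal k J)).toLinearMap := by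
  refine PiTensorProduct.ext (MultilinearMap.ext fun x => ?_)
  simp only [LinearMap.compMultilinearMap_apply, LinearMap.comp_apply, piQuot, piQuotInv,
    PiTensorProduct.map_tprod, PiTensorProduct.lift.tprod, MultilinearMap.compLinearMap_apply,
    MultilinearMap.mkPiAlgebra_apply, AlgHom.toLinearMap_apply]
  rw [tprod_eq_prod_single, map_prod]
  rfl

lemma piQuot_surjective (J : ∀ i, Ideal (R i)) :
    Function.Surjective (piQuot (k := k) J) := by
  rw [← LinearMap.range_eq_top, piQuot, PiTensorProduct.map_range_eq_span_tprod,
    ← PiTensorProduct.span_tprod_eq_top]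
  congr 1
  ext t
  constructor
  · rintro ⟨m, rfl⟩; exact ⟨_, rfl⟩
  · rintro ⟨m, rfl⟩
    choose a ha using fun i => Ideal.Quotient.mk_surjective (m i)
    exact ⟨a, congrArg _ (funext ha)⟩

lemma piQuot_eq_zero (J : ∀ i, Ideal (R i)) (t : ⨂[k] i, R i) (ht : t ∈ piBoxIdeal k J) :
    piQuot J t = 0 := by
  -- the same map as an algebra homomorphism
  let Φ : (⨂[k] i, R i) →ₐ[k] ⨂[k] i, (R i ⧸ J i) :=
    PiTensorProduct.liftAlgHom ((PiTensorProduct.tprod k).compLinearMap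
        fun i => (Ideal.Quotient.mkₐ k (J i)).toLinearMap)
      (congrArg (PiTensorProduct.tprod k) (funext fun i => map_one (Ideal.Quotient.mkₐ k (J i))))
      (fun x y => (congrArg (PiTensorProduct.tprod k)
        (funext fun i => map_mul (Ideal.Quotient.mkₐ k (J i)) (x i) (y i))).trans
          (PiTensorProduct.tprod_mul_tprod _ _).symm)
  suffices h : piBoxIdeal k J ≤ RingHom.ker Φ from h ht
  refine iSup_le fun i => Ideal.map_le_iff_le_comap.2 fun a ha => ?_
  change piQuot J (PiTensorProduct.tprod k (MonoidHom.mulSingle R i a)) = 0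
  rw [piQuot, PiTensorProduct.map_tprod]
  refine MultilinearMap.map_coord_zero _ i ?_
  simpa using Ideal.Quotient.eq_zero_iff_mem.2 ha

/-- Injectivity of `piQuotInv` says that `⊠ᵢ J(i)` is exactly the kernel of `piQuot J`, so that
dimensions of pieces of the quotient can be computed inside `⨂ᵢ R(i)/J(i)`. -/
lemma piQuotInv_injective (J : ∀ i, Ideal (R i)) :
    Function.Injective (piQuotInv (k := k) J) := by
  rw [injective_iff_map_eq_zero]
  intro t ht
  obtain ⟨s, rfl⟩ := piQuot_surjective J t
  refine piQuot_eq_zero J s ?_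
  rw [← LinearMap.comp_apply, piQuotInv_comp] at ht
  exact Ideal.Quotient.eq_zero_iff_mem.1 ht

lemma quotPieceDim_piBoxIdeal (J : ∀ i, Ideal (R i)) (P : Submodule k (⨂[k] i, R i)) :
    quotPieceDim k P (piBoxIdeal k J) = Module.finrank k (P.map (piQuot J)) := by
  rw [quotPieceDim, ← piQuotInv_comp, Submodule.map_comp]
  exact ((Submodule.equivMapOfInjective _ (piQuotInv_injective J) _).finrank_eq).symm

/-- With bases of the `R(i)/J(i)` adapted to the gradings, the degree-`N` piece of
`⨂ᵢ R(i)/J(i)` is spanned by the tensors of basis vectors of total degree `N`. -/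
lemma map_piTensorPiece (𝒜 : ∀ i, ℕ → Submodule k (R i)) (J : ∀ i, Ideal (R i))
    (hint : ∀ i, DirectSum.IsInternal
      (fun j => (𝒜 i j).map (Ideal.Quotient.mkₐ k (J i)).toLinearMap))
    {α : Fin n → ℕ → Type*}
    (v : ∀ i j, Module.Basis (α i j) k
      ((𝒜 i j).map (Ideal.Quotient.mkₐ k (J i)).toLinearMap)) (N : ℕ) :
    (piTensorPiece k 𝒜 N).map (piQuot J) =
      Submodule.span k (Basis.piTensorProduct (fun i => (hint i).collectedBasis (v i)) ''
        {s | ∑ i, (s i).1 = N}) := by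
  apply le_antisymm
  · simp only [piTensorPiece, Submodule.map_iSup, Submodule.map_span]
    refine iSup₂_le fun c hc => Submodule.span_le.2 ?_
    rintro _ ⟨_, ⟨x, hx, rfl⟩, rfl⟩
    rw [SetLike.mem_coe, Module.Basis.mem_span_image]
    intro s hs
    rw [Finset.mem_coe, Finsupp.mem_support_iff, piQuot, PiTensorProduct.map_tprod,
      Basis.piTensorProduct_repr_tprod_apply, Finset.prod_ne_zero_iff] at hs
    have : ∀ i, c i = (s i).1 := by
      intro i
      by_contra hne
      refine hs i (Finset.mem_univ i) ?_
      exact DirectSum.IsInternal.collectedBasis_repr_of_mem_ne (hint i) (v i) hne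
        (Submodule.mem_map_of_mem (hx i))
    rw [Set.mem_ofPred_eq, ← hc]
    exact Finset.sum_congr rfl fun i _ => (this i).symm
  · rw [Submodule.span_le]
    rintro _ ⟨s, hs, rfl⟩
    rw [Basis.piTensorProduct_apply]
    choose x hx hxe using fun i => (hint i).collectedBasis_mem (v i) (s i)
    refine ⟨PiTensorProduct.tprod k x, ?_, ?_⟩
    · exact Submodule.mem_iSup_of_mem (fun i => (s i).1) (Submodule.mem_iSup_of_mem hs
        (Submodule.subset_span ⟨x, hx, rfl⟩))
    · rw [piQuot, PiTensorProduct.map_tprod]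
      exact congrArg _ (funext hxe)

/-- The Hilbert function of `(⨂ᵢ R(i))/(⊠ᵢ J(i))` has generating function the product of those of
the `R(i)/J(i)`. -/
lemma quotPieceDim_piTensorPiece (𝒜 : ∀ i, ℕ → Submodule k (R i)) [∀ i, GradedAlgebra (𝒜 i)]
    (hfg : ∀ i j, (𝒜 i j).FG) (J : ∀ i, Ideal (R i)) (hJ : ∀ i, (J i).IsHomogeneous (𝒜 i))
    (N : ℕ) :
    quotPieceDim k (piTensorPiece k 𝒜 N) (piBoxIdeal k J) =
      PowerSeries.coeff N (∏ i, PowerSeries.mk fun j => quotPieceDim k (𝒜 i j) (J i)) := by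
  have hint := fun i => isInternal_map_mk (𝒜 i) (J i) (hJ i)
  have hfd : ∀ i j, Module.Finite k ((𝒜 i j).map (Ideal.Quotient.mkₐ k (J i)).toLinearMap) :=
    fun i j => Module.Finite.iff_fg.2 ((hfg i j).map _)
  let v : ∀ i j, Module.Basis (Fin (quotPieceDim k (𝒜 i j) (J i))) k
      ((𝒜 i j).map (Ideal.Quotient.mkₐ k (J i)).toLinearMap) := fun i j => Module.finBasis k ((𝒜 i j).map (Ideal.Quotient.mkₐ k (J i)).toLinearMap)
  rw [quotPieceDim_piBoxIdeal, map_piTensorPiece 𝒜 J hint v N]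
  let B := Basis.piTensorProduct (fun i => (hint i).collectedBasis (v i))
  -- a multi-index of total degree `N` is a degree vector together with an index in each degree
  let S := {s : ∀ i, Σ j, Fin (quotPieceDim k (𝒜 i j) (J i)) | ∑ i, (s i).1 = N}
  let e : S ≃ Σ c : {c : Fin n →₀ ℕ // c ∈ Finset.finsuppAntidiag Finset.univ N},
      ∀ i, Fin (quotPieceDim k (𝒜 i (c.1 i)) (J i)) :=
    { toFun := fun s => ⟨⟨Finsupp.equivFunOnFinite.symm fun i => (s.1 i).1,
          Finset.mem_finsuppAntidiag.2 ⟨s.2, Finset.subset_univ _⟩⟩, fun i => (s.1 i).2⟩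
      invFun := fun t => ⟨fun i => ⟨t.1.1 i, t.2 i⟩,
        (Finset.mem_finsuppAntidiag.1 t.1.2).1⟩
      left_inv := fun s => rfl
      right_inv := fun t => Sigma.ext (Subtype.ext (Finsupp.ext fun _ => rfl)) HEq.rfl }
  have : Finite S := Finite.of_equiv _ e.symm
  have : Fintype S := Fintype.ofFinite S
  change Module.finrank k (Submodule.span k (B '' S)) = _
  rw [Set.image_eq_range]
  have hli : LinearIndependent k fun s : S => B s :=
    B.linearIndependent.comp _ Subtype.val_injective
  rw [finrank_span_eq_card hli, ← Nat.card_eq_fintype_card, Nat.card_congr e, Nat.card_sigma,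
    PowerSeries.coeff_prod, Finset.sum_coe_sort (Finset.finsuppAntidiag Finset.univ N)
      (fun c => Nat.card (∀ i, Fin (quotPieceDim k (𝒜 i (c i)) (J i))))]
  refine Finset.sum_congr rfl fun c _ => ?_
  simp

end Tensor

/-! ### Discrete convolutions as Riemann sums -/

/-- `ScaledLimit q a f`: the functions `a m : ℕ → ℝ`, read at scale `q m`, converge to `f`. On
every `[0, B]` they are eventually uniformly bounded, and `a m (N m) → f x` whenever
`N m / q m → x ≥ 0`. This is weak enough to need no regularity of `f`, and is preserved by
convolution. -/
structure ScaledLimit (q : ℕ → ℕ) (a : ℕ → ℕ → ℝ) (f : ℝ → ℝ) : Prop where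
  zero_of_neg : ∀ x < 0, f x = 0
  bdd : ∀ B : ℝ, ∃ C : ℝ, ∀ᶠ m in atTop, ∀ j : ℕ, (j : ℝ) ≤ B * q m → |a m j| ≤ C
  lim : ∀ (N : ℕ → ℕ) (x : ℝ), 0 ≤ x → Tendsto (fun m => (N m : ℝ) / q m) atTop (nhds x) →
    Tendsto (fun m => a m (N m)) atTop (nhds (f x))

lemma ScaledLimit.congr {q : ℕ → ℕ} {a b : ℕ → ℕ → ℝ} {f : ℝ → ℝ} (h : ScaledLimit q a f)
    (hab : ∀ m j, a m j = b m j) : ScaledLimit q b f := by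
  obtain rfl : a = b := funext fun m => funext (hab m)
  exact h

/-- A sum over `i + j = N`, divided by `q`, is the integral of a step function. -/
lemma sum_antidiagonal_eq_integral {q : ℕ} (hq : 0 < q) (a b : ℕ → ℝ) (N : ℕ) :
    (q : ℝ)⁻¹ * ∑ ij ∈ Finset.HasAntidiagonal.antidiagonal N, a ij.1 * b ij.2 =
      ∫ y : ℝ, if 0 ≤ y ∧ ⌊q * y⌋₊ ≤ N then a ⌊q * y⌋₊ * b (N - ⌊q * y⌋₊) else 0 := by
  have hq' : (0 : ℝ) < q := by exact_mod_cast hq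
  rw [Finset.Nat.sum_antidiagonal_eq_sum_range_succ (fun i j => a i * b j)]
  have hpt : (fun y : ℝ => if 0 ≤ y ∧ ⌊q * y⌋₊ ≤ N then a ⌊q * y⌋₊ * b (N - ⌊q * y⌋₊) else 0) =
      fun y => ∑ i ∈ Finset.range N.succ,
        (Set.Ico ((i : ℝ) / q) ((i + 1 : ℝ) / q)).indicator (fun _ => a i * b (N - i)) y := by
    funext y
    have hmem : ∀ i : ℕ, y ∈ Set.Ico ((i : ℝ) / q) ((i + 1 : ℝ) / q) ↔
        0 ≤ y ∧ ⌊q * y⌋₊ = i := by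
      intro i
      rw [Set.mem_Ico, div_le_iff₀ hq', lt_div_iff₀ hq', mul_comm y]
      constructor
      · rintro ⟨h1, h2⟩
        have h0 : 0 ≤ (q : ℝ) * y := le_trans (Nat.cast_nonneg i) h1
        exact ⟨nonneg_of_mul_nonneg_right h0 hq', (Nat.floor_eq_iff h0).2 ⟨h1, h2⟩⟩
      · rintro ⟨h0, h1⟩
        exact (Nat.floor_eq_iff (by positivity)).1 h1
    simp only [Set.indicator_apply, hmem]
    split_ifs with h
    · rw [Finset.sum_eq_single ⌊q * y⌋₊]
      · simp [h.1]
      · intro i _ hi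
        rw [if_neg fun h' => hi h'.2.symm]
      · intro hh
        exact absurd (Finset.mem_range_succ_iff.2 h.2) hh
    · refine (Finset.sum_eq_zero fun i hi => if_neg ?_).symm
      rintro ⟨h0, rfl⟩
      exact h ⟨h0, Finset.mem_range_succ_iff.1 hi⟩
  rw [hpt, integral_finsetSum, Finset.mul_sum]
  · refine Finset.sum_congr rfl fun i _ => ?_
    rw [integral_indicator measurableSet_Ico, setIntegral_const, measureReal_def,
      Real.volume_Ico, smul_eq_mul, ← sub_div, add_sub_cancel_left, ENNReal.toReal_ofReal (by positivity)]
    ring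
  · intro i _
    refine (integrable_indicator_iff measurableSet_Ico).2 ?_
    exact integrableOn_const (by simp)

/-- Convolution is compatible with `ScaledLimit`, by dominated convergence. -/
lemma ScaledLimit.conv {q : ℕ → ℕ} (hq : ∀ m, 0 < q m) (hqt : Tendsto q atTop atTop)
    {a b : ℕ → ℕ → ℝ} {f g : ℝ → ℝ} (ha : ScaledLimit q a f) (hb : ScaledLimit q b g) :
    ScaledLimit q (fun m N => (q m : ℝ)⁻¹ * ∑ ij ∈ Finset.HasAntidiagonal.antidiagonal N, a m ij.1 * b m ij.2)
      (convolution f g) where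
  zero_of_neg x hx := by
    refine integral_eq_zero_of_ae (Eventually.of_forall fun y => ?_)
    rcases lt_or_ge y 0 with hy | hy
    · simp [ha.zero_of_neg y hy]
    · simp [hb.zero_of_neg (x - y) (by linarith)]
  bdd B := by
    obtain ⟨C, hC⟩ := ha.bdd B
    obtain ⟨D, hD⟩ := hb.bdd B
    refine ⟨(B + 1) * (C * D), ?_⟩
    filter_upwards [hC, hD] with m hC hD j hj
    have hq' : (0 : ℝ) < q m := by exact_mod_cast hq m
    have hq1 : (1 : ℝ) ≤ q m := by exact_mod_cast hq m
    have h0 : ((0 : ℕ) : ℝ) ≤ B * q m := le_trans (by simp) hj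
    have hC0 : 0 ≤ C := (abs_nonneg _).trans (hC 0 h0)
    have hD0 : 0 ≤ D := (abs_nonneg _).trans (hD 0 h0)
    have hs : |∑ ij ∈ Finset.HasAntidiagonal.antidiagonal j, a m ij.1 * b m ij.2| ≤ (j + 1) * (C * D) := by
      refine (Finset.abs_sum_le_sum_abs _ _).trans ?_
      refine (Finset.sum_le_card_nsmul _ _ (C * D) fun ij hij => ?_).trans_eq ?_
      · rw [abs_mul]
        have h1 : (ij.1 : ℝ) ≤ j := by exact_mod_cast Finset.HasAntidiagonal.antidiagonal.fst_le hij
        have h2 : (ij.2 : ℝ) ≤ j := by exact_mod_cast Finset.HasAntidiagonal.antidiagonal.snd_le hij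
        exact mul_le_mul (hC _ (h1.trans hj)) (hD _ (h2.trans hj)) (abs_nonneg _) hC0
      · simp
    rw [abs_mul, abs_of_pos (inv_pos.2 hq'), inv_mul_le_iff₀ hq']
    refine hs.trans ?_
    have : (j : ℝ) + 1 ≤ q m * (B + 1) := by nlinarith
    calc ((j : ℝ) + 1) * (C * D) ≤ q m * (B + 1) * (C * D) := by gcongr
      _ = _ := by ring
  lim N x hx hN := by
    simp only [sum_antidiagonal_eq_integral (hq _)]
    obtain ⟨C, hC⟩ := ha.bdd (x + 1)
    obtain ⟨D, hD⟩ := hb.bdd (x + 1)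
    have hqR : Tendsto (fun m => (q m : ℝ)) atTop atTop := tendsto_natCast_atTop_atTop.comp hqt
    have hNle : ∀ᶠ m in atTop, (N m : ℝ) / q m < x + 1 / 2 :=
      hN.eventually_lt_const (by linarith)
    have hqbig : ∀ᶠ m in atTop, (2 : ℝ) ≤ q m := hqR.eventually_ge_atTop 2
    refine tendsto_integral_filter_of_dominated_convergence
      ((Set.Icc 0 (x + 1)).indicator fun _ => C * D) ?_ ?_ ?_ ?_
    · refine Eventually.of_forall fun m => Measurable.aestronglyMeasurable ?_
      have hfl : Measurable fun y : ℝ => ⌊(q m : ℝ) * y⌋₊ :=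
        Nat.measurable_floor.comp (measurable_const_mul _)
      refine Measurable.ite ?_ ?_ measurable_const
      · exact measurableSet_Ici.inter (hfl (Set.to_countable (Set.Iic (N m))).measurableSet)
      · exact (measurable_from_nat (f := fun t => a m t * b m (N m - t))).comp hfl
    · filter_upwards [hC, hD, hNle, hqbig] with m hC hD hN' hq2
      refine Eventually.of_forall fun y => ?_
      have hq' : (0 : ℝ) < q m := by linarith
      rw [div_lt_iff₀ hq'] at hN'
      split_ifs with h
      · have hfl : (⌊(q m : ℝ) * y⌋₊ : ℝ) ≤ N m := by exact_mod_cast h.2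
        have hlt := Nat.lt_floor_add_one ((q m : ℝ) * y)
        have hy : y ≤ x + 1 := by
          by_contra! hcon
          nlinarith
        rw [Set.indicator_of_mem (show y ∈ Set.Icc 0 (x + 1) from ⟨h.1, hy⟩), Real.norm_eq_abs,
          abs_mul]
        have hNB : (N m : ℝ) ≤ (x + 1) * q m := by nlinarith
        have h1 := hC _ (hfl.trans hNB)
        have h2 := hD (N m - ⌊(q m : ℝ) * y⌋₊)
          (le_trans (by exact_mod_cast Nat.sub_le _ _) hNB)
        exact mul_le_mul h1 h2 (abs_nonneg _) ((abs_nonneg _).trans h1)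
      · rw [norm_zero]
        refine Set.indicator_nonneg (fun _ _ => ?_) _
        have h0 : ((0 : ℕ) : ℝ) ≤ (x + 1) * q m := by push_cast; positivity
        exact mul_nonneg ((abs_nonneg _).trans (hC 0 h0)) ((abs_nonneg _).trans (hD 0 h0))
    · refine (integrable_indicator_iff measurableSet_Icc).2 ?_
      exact integrableOn_const (by simp)
    · have hne : ∀ᵐ y : ℝ, y ≠ x := by simp [ae_iff, measure_singleton]
      filter_upwards [hne] with y hyx
      rcases lt_or_ge y 0 with hy | hy
      · simp [ha.zero_of_neg y hy, not_le.2 hy]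
      have hfloor : Tendsto (fun m => (⌊(q m : ℝ) * y⌋₊ : ℝ) / q m) atTop (nhds y) := by
        have := (tendsto_nat_floor_mul_div_atTop hy).comp hqR
        refine this.congr fun m => ?_
        simp [mul_comm]
      rcases lt_or_gt_of_ne hyx with hlt | hgt
      · have hev : ∀ᶠ m in atTop, ⌊(q m : ℝ) * y⌋₊ ≤ N m := by
          filter_upwards [hfloor.eventually_lt hN hlt] with m hm
          have hq' : (0 : ℝ) < q m := by exact_mod_cast hq m
          exact_mod_cast ((div_lt_div_iff_of_pos_right hq').1 hm).le
        have hdiff : Tendsto (fun m => ((N m - ⌊(q m : ℝ) * y⌋₊ : ℕ) : ℝ) / q m) atTop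
            (nhds (x - y)) := by
          refine (hN.sub hfloor).congr' ?_
          filter_upwards [hev] with m hm
          rw [Nat.cast_sub hm, sub_div]
        refine ((ha.lim _ y hy hfloor).mul (hb.lim _ (x - y) (by linarith) hdiff)).congr' ?_
        filter_upwards [hev] with m hm
        rw [if_pos ⟨hy, hm⟩]
      · rw [hb.zero_of_neg (x - y) (by linarith), mul_zero]
        refine tendsto_const_nhds.congr' ?_
        filter_upwards [hN.eventually_lt hfloor hgt] with m hm
        have hq' : (0 : ℝ) < q m := by exact_mod_cast hq m
        have : N m < ⌊(q m : ℝ) * y⌋₊ := by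
          exact_mod_cast (div_lt_div_iff_of_pos_right hq').1 hm
        rw [if_neg fun h => absurd h.2 (not_le.2 this)]

/-- Iterating `ScaledLimit.conv`. The `N`-th coefficient of the product of the generating functions
`∑ⱼ aᵢ(j) Xʲ` is the `(n + 1)`-fold discrete convolution, with one factor `q⁻¹` for each of the `n`
convolutions. -/
lemma ScaledLimit.convFold {q : ℕ → ℕ} (hq : ∀ m, 0 < q m) (hqt : Tendsto q atTop atTop) :
    ∀ {n : ℕ} (a : Fin (n + 1) → ℕ → ℕ → ℝ) (f : Fin (n + 1) → ℝ → ℝ),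
      (∀ i, ScaledLimit q (a i) (f i)) →
      ScaledLimit q (fun m N => ((q m : ℝ) ^ n)⁻¹ *
        PowerSeries.coeff N (∏ i, PowerSeries.mk (a i m))) (_root_.convFold f) := by
  intro n
  induction n with
  | zero =>
    intro a f h
    exact (h 0).congr fun m j => by simp
  | succ n ih =>
    intro a f h
    refine ((ih (Fin.init a) (Fin.init f) fun i => h i.castSucc).conv hq hqt
      (h (Fin.last _))).congr fun m N => ?_
    rw [Fin.prod_univ_castSucc (n := n + 1), PowerSeries.coeff_mul, pow_succ, mul_inv_rev, mul_assoc,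
      Finset.mul_sum (a := ((q m : ℝ) ^ n)⁻¹)]
    congr 1
    refine Finset.sum_congr rfl fun ij _ => ?_
    rw [PowerSeries.coeff_mk, mul_assoc]
    rfl

/-- Uniform convergence of the normalized Hilbert functions to a bounded continuous function gives
convergence of the underlying functions on `ℕ`. -/
lemma scaledLimit_normHilb {k : Type*} [Field k] {A : Type*} [CommRing A] [Algebra k A]
    (P : ℕ → Submodule k A) (I : Ideal A) (d : ℕ) {q : ℕ → ℕ} (hq : ∀ m, 0 < q m)
    {f : ℝ → ℝ} (hfc : Continuous f) (hfs : HasCompactSupport f) (hf0 : ∀ x < 0, f x = 0)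
    (hu : TendstoUniformlyOn (fun m => normHilb k P I d (q m)) f atTop (Set.Ici 0)) :
    ScaledLimit q (fun m N => (q m : ℝ) ^ ((1 : ℤ) - (d : ℤ)) *
      quotPieceDim k (P N) (frobeniusPower I (q m))) f := by
  have hval : ∀ m N, (q m : ℝ) ^ ((1 : ℤ) - (d : ℤ)) *
      quotPieceDim k (P N) (frobeniusPower I (q m)) =
      normHilb k P I d (q m) ((N : ℝ) / q m) := by
    intro m N
    have hq' : (0 : ℝ) < q m := by exact_mod_cast hq m
    rw [normHilb, if_neg (not_lt.2 (by positivity)), mul_div_cancel₀ _ hq'.ne', Nat.floor_natCast]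
  simp only [hval]
  refine ⟨hf0, fun B => ?_, fun N x hx hN => ?_⟩
  · obtain ⟨C, hC⟩ := hfc.bounded_above_of_compact_support hfs
    refine ⟨C + 1, ?_⟩
    filter_upwards [Metric.tendstoUniformlyOn_iff.1 hu 1 one_pos] with m hm j _
    have h1 := hm ((j : ℝ) / q m) (Set.mem_Ici.2 (by positivity))
    have h2 := hC ((j : ℝ) / q m)
    rw [Real.dist_eq] at h1
    rw [Real.norm_eq_abs] at h2
    have := abs_sub_abs_le_abs_sub (normHilb k P I d (q m) ((j : ℝ) / q m)) (f ((j : ℝ) / q m))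
    rw [abs_sub_comm] at h1
    linarith
  · refine hu.tendsto_comp (hfc.continuousWithinAt) ?_
    refine tendsto_nhdsWithin_iff.2 ⟨hN, Eventually.of_forall fun m => ?_⟩
    exact Set.mem_Ici.2 (by positivity)

/-! ### The convolution formula -/

/-- **Theorem 1.1**: Let `R(1), …, R(n)` be standard graded rings of Krull dimensions
`dᵢ ≥ 2` over a perfect field `k` of characteristic `p > 0`, and `I(i) ⊆ R(i)` homogeneous
ideals of finite colength. If the normalized Hilbert functions of each `(R(i), I(i))` converge
uniformly on `[0,∞)` to compactly supported continuous functions `fᵢ`, and those of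
`(⨂ᵢ R(i), ⊠ᵢ I(i))` (normalized by `q^{1-Σᵢdᵢ}`) converge uniformly to a compactly
supported continuous `h`, then (extending by `0` to `(-∞, 0]`) `h = f₁ * f₂ * ⋯ * fₙ`,
the `n`-fold convolution. -/
theorem hkDensity_piTensor_eq_convFold {k : Type*} [Field k] [PerfectField k] {p : ℕ}
    (hp : p.Prime) [CharP k p] {n : ℕ} {R : Fin (n + 1) → Type*}
    [∀ i, CommRing (R i)] [∀ i, Algebra k (R i)]
    (𝒜 : ∀ i, ℕ → Submodule k (R i)) [∀ i, GradedAlgebra (𝒜 i)]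
    (hstd : ∀ i, IsStandardGraded k (𝒜 i))
    (d : Fin (n + 1) → ℕ) (hd : ∀ i, 2 ≤ d i) (hdim : ∀ i, ringKrullDim (R i) = d i)
    (I : ∀ i, Ideal (R i)) (hIhom : ∀ i, Ideal.IsHomogeneous (𝒜 i) (I i))
    (hIcol : ∀ i, FiniteDimensional k (R i ⧸ I i))
    (f : Fin (n + 1) → ℝ → ℝ) (h : ℝ → ℝ)
    (hfc : ∀ i, Continuous (f i)) (hfsupp : ∀ i, HasCompactSupport (f i))
    (hf0 : ∀ i, ∀ x : ℝ, x < 0 → f i x = 0)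
    (hhc : Continuous h) (hhsupp : HasCompactSupport h) (hh0 : ∀ x : ℝ, x < 0 → h x = 0)
    (hfu : ∀ i, TendstoUniformlyOn (fun m => normHilb k (𝒜 i) (I i) (d i) (p ^ m)) (f i)
      atTop (Set.Ici 0))
    (hhu : TendstoUniformlyOn
      (fun m => normHilb k (piTensorPiece k 𝒜) (piBoxIdeal k I) (∑ i, d i) (p ^ m)) h
      atTop (Set.Ici 0)) :
    h = convFold f := by
  have hq : ∀ m, 0 < p ^ m := fun m => pow_pos hp.pos m
  have hqt : Tendsto (fun m => p ^ m) atTop atTop := tendsto_pow_atTop_atTop_of_one_lt hp.one_lt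
  have : Fact p.Prime := ⟨hp⟩
  have hnt : ∀ i, Nontrivial (R i) := fun i => by
    by_contra hsub
    rw [not_nontrivial_iff_subsingleton] at hsub
    exact absurd ((hdim i).symm.trans ringKrullDim_eq_bot_of_subsingleton) (WithBot.coe_ne_bot)
  have hcharR : ∀ i, CharP (R i) p := fun i =>
    charP_of_injective_algebraMap (algebraMap k (R i)).injective p
  -- a basis of each `R i` gives one of the tensor product, which is therefore nonzero
  have hntT : Nontrivial (⨂[k] i, R i) := by
    let b := Basis.piTensorProduct fun i => Module.Basis.ofVectorSpace k (R i)
    have : ∀ i, Nonempty (Module.Basis.ofVectorSpaceIndex k (R i)) := fun i =>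
      (Module.Basis.ofVectorSpace k (R i)).index_nonempty
    exact ⟨b (fun i => Classical.arbitrary _), 0, b.ne_zero _⟩
  have hcharT : CharP (⨂[k] i, R i) p :=
    charP_of_injective_algebraMap (algebraMap k (⨂[k] i, R i)).injective p
  have hT : ∀ m N, quotPieceDim k (piTensorPiece k 𝒜 N) (frobeniusPower (piBoxIdeal k I) (p ^ m)) =
      PowerSeries.coeff N (∏ i, PowerSeries.mk fun j =>
        quotPieceDim k (𝒜 i j) (frobeniusPower (I i) (p ^ m))) := by
    intro m N
    rw [← quotPieceDim_piTensorPiece 𝒜 (fun i => finite_piece (hstd i)) _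
      (fun i => frobeniusPower_isHomogeneous (𝒜 i) (I i) (hIhom i) p m)]
    congr 1
    exact frobeniusPower_iSup_map
      (fun i => (PiTensorProduct.singleAlgHom (R := k) (A := R) i : R i →+* ⨂[k] i, R i)) I p m
  have hfold := ScaledLimit.convFold hq hqt _ f fun i =>
    scaledLimit_normHilb (𝒜 i) (I i) (d i) hq (hfc i) (hfsupp i) (hf0 i) (hfu i)
  have hlim := scaledLimit_normHilb (piTensorPiece k 𝒜) (piBoxIdeal k I) (∑ i, d i) hq hhc hhsupp
    hh0 hhu
  -- `q ^ (1 - ∑ dᵢ) = q ^ (-n) * ∏ q ^ (1 - dᵢ)` over the `n + 1` factors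
  have heq : ∀ m N, (((p ^ m : ℕ) : ℝ) ^ n)⁻¹ * PowerSeries.coeff N (∏ i, PowerSeries.mk fun j =>
      ((p ^ m : ℕ) : ℝ) ^ ((1 : ℤ) - (d i : ℤ)) *
        quotPieceDim k (𝒜 i j) (frobeniusPower (I i) (p ^ m))) =
      ((p ^ m : ℕ) : ℝ) ^ ((1 : ℤ) - ((∑ i, d i : ℕ) : ℤ)) *
        quotPieceDim k (piTensorPiece k 𝒜 N) (frobeniusPower (piBoxIdeal k I) (p ^ m)) := by
    intro m N
    have hq0 : ((p ^ m : ℕ) : ℝ) ≠ 0 := by exact_mod_cast (hq m).ne'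
    generalize ((p ^ m : ℕ) : ℝ) = q at hq0
    rw [hT, PowerSeries.coeff_prod, PowerSeries.coeff_prod]
    simp only [PowerSeries.coeff_mk, Finset.prod_mul_distrib]
    rw [← Finset.mul_sum, ← mul_assoc]
    push_cast
    congr 1
    have hprod : ∏ i, q ^ ((1 : ℤ) - (d i : ℤ)) = q ^ (∑ i, ((1 : ℤ) - (d i : ℤ))) := by
      induction (Finset.univ : Finset (Fin (n + 1))) using Finset.cons_induction with
      | empty => simp
      | cons a s ha ih => rw [Finset.prod_cons, Finset.sum_cons, ih, zpow_add₀ hq0]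
    rw [hprod, ← zpow_natCast, ← zpow_neg, ← zpow_add₀ hq0]
    congr 1
    rw [Finset.sum_sub_distrib]
    simp
    ring
  have hfold' := hfold.congr heq
  funext x
  rcases lt_or_ge x 0 with hx | hx
  · rw [hh0 x hx, hfold'.zero_of_neg x hx]
  · have hN : Tendsto (fun m => (⌊((p ^ m : ℕ) : ℝ) * x⌋₊ : ℝ) / ((p ^ m : ℕ) : ℝ)) atTop
        (nhds x) := by
      refine ((tendsto_nat_floor_mul_div_atTop hx).comp
        (tendsto_natCast_atTop_atTop.comp hqt)).congr fun m => ?_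
      simp [mul_comm]
    exact tendsto_nhds_unique (hlim.lim _ x hx hN) (hfold'.lim _ x hx hN)
end

section
/- Let k be a field, let R and S be commutative k-algebras, and let I ⊆ R and J ⊆ S be ideals. In T = R ⊗_k S, let I^e denote the ideal generated by { a⊗1 : a ∈ I } and J^e the ideal generated by { 1⊗b : b ∈ J }. Then I^e ∩ J^e = I^e · J^e; in other words, the intersection of the extended ideals (I ⊗ S) ∩ (R ⊗ J) equals I ⊗ J inside R ⊗_k S. -/
open scoped TensorProduct

/-!
A subspace of a vector space is the image of a projection, so there are `k`-linear projections
`p : R → R` onto `I` and `q : S → S` onto `J`. The map `p ⊗ id` fixes `I^e`, whose elements are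
sums of tensors `a ⊗ s` with `a ∈ I`; likewise `id ⊗ q` fixes `J^e`. Hence `x ∈ I^e ∩ J^e`
satisfies `x = (p ⊗ id) ((id ⊗ q) x) = (p ⊗ q) x`, and the image of `p ⊗ q` lies in `I^e * J^e`
because `p r ⊗ q s = (p r ⊗ 1) * (1 ⊗ q s)`.
-/

/-- Every ideal of an algebra over a field is the image of a `k`-linear projection. -/
lemma exists_linear_projection {k R : Type*} [Field k] [CommRing R] [Algebra k R] (I : Ideal R) :
    ∃ p : R →ₗ[k] R, (∀ r, p r ∈ I) ∧ ∀ r ∈ I, p r = r := by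
  obtain ⟨f, hf⟩ := (I.restrictScalars k).subtype.exists_leftInverse_of_injective
    (Submodule.ker_subtype _)
  refine ⟨(I.restrictScalars k).subtype ∘ₗ f, fun r => (f r).2, fun r hr => ?_⟩
  exact congrArg Subtype.val (LinearMap.congr_fun hf ⟨r, hr⟩)

lemma rTensor_eq_self_of_mem {k R S : Type*} [Field k] [CommRing R] [CommRing S]
    [Algebra k R] [Algebra k S] (I : Ideal R) (p : R →ₗ[k] R) (hp : ∀ r ∈ I, p r = r)
    (x : R ⊗[k] S)
    (hx : x ∈ I.map (Algebra.TensorProduct.includeLeft : R →ₐ[k] R ⊗[k] S)) :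
    LinearMap.rTensor S p x = x := by
  rw [← Submodule.restrictScalars_mem k, Ideal.map_includeLeft_eq] at hx
  obtain ⟨y, rfl⟩ := hx
  have h : p ∘ₗ (I.restrictScalars k).subtype = (I.restrictScalars k).subtype :=
    LinearMap.ext fun a => hp a.1 a.2
  rw [← LinearMap.comp_apply, ← LinearMap.rTensor_comp, h]

lemma lTensor_eq_self_of_mem {k R S : Type*} [Field k] [CommRing R] [CommRing S]
    [Algebra k R] [Algebra k S] (J : Ideal S) (q : S →ₗ[k] S) (hq : ∀ s ∈ J, q s = s)
    (x : R ⊗[k] S)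
    (hx : x ∈ J.map (Algebra.TensorProduct.includeRight : S →ₐ[k] R ⊗[k] S)) :
    LinearMap.lTensor R q x = x := by
  rw [← Submodule.restrictScalars_mem k, Ideal.map_includeRight_eq] at hx
  obtain ⟨y, rfl⟩ := hx
  have h : q ∘ₗ (J.restrictScalars k).subtype = (J.restrictScalars k).subtype :=
    LinearMap.ext fun b => hq b.1 b.2
  rw [← LinearMap.comp_apply, ← LinearMap.lTensor_comp, h]

/-- For `k`-algebras `R, S` over a field `k` and ideals `I ⊆ R`, `J ⊆ S`, the intersection of
the extended ideals `(I ⊗ S) ∩ (R ⊗ J)` in `R ⊗[k] S` equals their product `I ⊗ J`;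
that is, `I^e ∩ J^e = I^e · J^e`. -/
theorem inf_extended_eq_mul_extended {k : Type*} [Field k] {R S : Type*} [CommRing R] [CommRing S]
    [Algebra k R] [Algebra k S] (I : Ideal R) (J : Ideal S) :
    I.map (Algebra.TensorProduct.includeLeft : R →ₐ[k] R ⊗[k] S) ⊓
        J.map (Algebra.TensorProduct.includeRight : S →ₐ[k] R ⊗[k] S) =
      I.map (Algebra.TensorProduct.includeLeft : R →ₐ[k] R ⊗[k] S) *
        J.map (Algebra.TensorProduct.includeRight : S →ₐ[k] R ⊗[k] S) := by
  refine le_antisymm (fun x hx => ?_) Ideal.mul_le_inf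
  obtain ⟨p, hpI, hp⟩ := exists_linear_projection (k := k) I
  obtain ⟨q, hqJ, hq⟩ := exists_linear_projection (k := k) J
  rw [← rTensor_eq_self_of_mem I p hp x hx.1, ← lTensor_eq_self_of_mem J q hq x hx.2]
  -- `x` now occurs only under `p ⊗ q`, so membership can be checked on pure tensors.
  clear hx
  induction x with
  | zero => simp
  | tmul r s =>
    have h : p r ⊗ₜ[k] q s = (p r ⊗ₜ[k] (1 : S)) * ((1 : R) ⊗ₜ[k] q s) := by simp
    rw [LinearMap.lTensor_tmul, LinearMap.rTensor_tmul, h]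
    exact Ideal.mul_mem_mul
      (Ideal.mem_map_of_mem (Algebra.TensorProduct.includeLeft : R →ₐ[k] R ⊗[k] S) (hpI r))
      (Ideal.mem_map_of_mem (Algebra.TensorProduct.includeRight : S →ₐ[k] R ⊗[k] S) (hqJ s))
  | add x y hx hy =>
    rw [map_add, map_add]
    exact add_mem hx hy
end

section
/- Let d > 0 be a real number, l, l' ≥ 1 integers, a_1, ..., a_l real numbers with a_j ≤ 0 for all j, e_1, ..., e_{l'} real numbers with e_k ≥ 1 for all k, and r_1, ..., r_l, s_1, ..., s_{l'} positive real numbers satisfying Σ_{k=1}^{l'} s_k = Σ_{j=1}^{l} r_j + 1 and Σ_{k=1}^{l'} (1 − e_k) s_k − Σ_{j=1}^{l} a_j r_j = d. Define f : ℝ → ℝ by f(x) = 0 for x < 0, f(x) = d·x for 0 ≤ x ≤ 1, and f(x) = Σ_{j=1}^{l} r_j · max(0, −(a_j + d(x−1))) − Σ_{k=1}^{l'} s_k · max(0, −((1 − e_k) + d(x−1))) for x > 1. Then f is integrable and for every ξ ∈ ℂ with ξ ≠ 0, its holomorphic Fourier transform satisfies f̂(ξ) = ∫_ℝ f(x) e^{−ixξ}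 dx = −(d/ξ²) [ Σ_{j=1}^{l} r_j e^{−i(1 − a_j/d)ξ} − Σ_{k=1}^{l'} s_k e^{−i(1 − (1 − e_k)/d)ξ} + 1 ]. -/
/-!
With `c_j = 1 - a_j / d ≥ 1` and `c'_k = 1 - (1 - e_k) / d ≥ 1`, the density is
`f = d • (x on (0, 1]) + ∑ j, d r_j • (c_j - x on (1, c_j]) - ∑ k, d s_k • (c'_k - x on (1, c'_k])`,
a finite combination of compactly supported affine pieces.
Each piece is integrated by the explicit primitive of `(α + β x) e^{w x}`, where `w = -iξ`
(`integral_affinePiece`).  The contributions of the breakpoint `x = 1` are multiples of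
`e^w / w ^ 2` and `e^w / w`; the coefficient of the former vanishes by `hsum` and that of the
latter by `hdeg`.  The terms from `0`, `c_j` and `c'_k` are the right-hand side, as `w ^ 2 = -ξ ^ 2`.
-/

open MeasureTheory

/-- The affine function `α + β x` cut off to the interval `(u, v]`. -/
noncomputable def affinePiece (α β u v : ℝ) : ℝ → ℝ :=
  (Set.Ioc u v).indicator fun x => α + β * x

lemma integrable_affinePiece (α β u v : ℝ) : Integrable (affinePiece α β u v) := by
  have h : IntegrableOn (fun x : ℝ => α + β * x) (Set.Ioc u v) :=
    (Continuous.integrableOn_Icc (by fun_prop)).mono_set Set.Ioc_subset_Icc_self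
  exact h.integrable_indicator measurableSet_Ioc

lemma affinePiece_mul_exp (α β u v : ℝ) (w : ℂ) :
    (fun x : ℝ => (affinePiece α β u v x : ℂ) * Complex.exp (w * x)) =
      (Set.Ioc u v).indicator fun x : ℝ => ((α : ℂ) + β * x) * Complex.exp (w * x) := by
  funext x
  by_cases hx : x ∈ Set.Ioc u v
  · simp [affinePiece, Set.indicator_of_mem hx]
  · simp [affinePiece, Set.indicator_of_notMem hx]

lemma integrable_affinePiece_mul_exp (α β u v : ℝ) (w : ℂ) :
    Integrable fun x : ℝ => (affinePiece α β u v x : ℂ) * Complex.exp (w * x) := by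
  rw [affinePiece_mul_exp]
  have h : IntegrableOn (fun x : ℝ => ((α : ℂ) + β * x) * Complex.exp (w * x)) (Set.Ioc u v) :=
    (Continuous.integrableOn_Icc (by fun_prop)).mono_set Set.Ioc_subset_Icc_self
  exact h.integrable_indicator measurableSet_Ioc

lemma integral_affinePiece (α β : ℝ) {u v : ℝ} (huv : u ≤ v) {w : ℂ} (hw : w ≠ 0) :
    ∫ x : ℝ, (affinePiece α β u v x : ℂ) * Complex.exp (w * x) =
      (((α : ℂ) + β * v) / w - β / w ^ 2) * Complex.exp (w * v)
        - (((α : ℂ) + β * u) / w - β / w ^ 2) * Complex.exp (w * u) := by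
  rw [affinePiece_mul_exp, integral_indicator measurableSet_Ioc,
    ← intervalIntegral.integral_of_le huv]
  refine intervalIntegral.integral_eq_sub_of_hasDerivAt
    (f := fun x : ℝ => (((α : ℂ) + β * x) / w - β / w ^ 2) * Complex.exp (w * x)) ?_ ?_
  · intro x _
    have hid : HasDerivAt (fun x : ℝ => (x : ℂ)) 1 x := Complex.ofRealCLM.hasDerivAt
    have h1 := (((hid.const_mul (β : ℂ)).const_add (α : ℂ)).div_const w).sub_const
      ((β : ℂ) / w ^ 2)
    refine (h1.mul (hid.const_mul w).cexp).congr_deriv ?_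
    field_simp
    ring
  · exact Continuous.intervalIntegrable (by fun_prop) _ _

/-- Past `1`, the hinge `max 0 (-(t + d (x - 1)))` is `d` times the affine piece `c - x` on
`(1, c]`, where `c = 1 - t / d`. -/
lemma hinge_eq_affinePiece {d : ℝ} (hd : 0 < d) (t : ℝ) {x : ℝ} (hx : 1 < x) :
    max 0 (-(t + d * (x - 1))) = d * affinePiece (1 - t / d) (-1) 1 (1 - t / d) x := by
  have key : -(t + d * (x - 1)) = d * ((1 - t / d) + -1 * x) := by
    field_simp
    ring
  rw [key]
  by_cases h : x ≤ 1 - t / d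
  · rw [affinePiece, Set.indicator_of_mem (Set.mem_Ioc.2 ⟨hx, h⟩), max_eq_right]
    exact mul_nonneg hd.le (by linarith)
  · rw [affinePiece, Set.indicator_of_notMem (fun h' => h h'.2), mul_zero, max_eq_left]
    exact mul_nonpos_of_nonneg_of_nonpos hd.le (by linarith)

lemma affinePiece_of_le (α β v : ℝ) {u x : ℝ} (hx : x ≤ u) : affinePiece α β u v x = 0 :=
  Set.indicator_of_notMem (fun h => absurd h.1 hx.not_gt) _

/-- The holomorphic Fourier transform of the Hilbert–Kunz density function of a projective
curve of degree `d`, with strong HN data `(a_j, r_j)` and generator data `(e_k, s_k)`: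
for `ξ ≠ 0`,
`f̂(ξ) = ∫_ℝ f(x) e^{−ixξ} dx
   = −(d/ξ²) [ Σ_j r_j e^{−i(1−a_j/d)ξ} − Σ_k s_k e^{−i(1−(1−e_k)/d)ξ} + 1 ]`. -/
theorem fourier_of_HK_density_curve (d : ℝ) (hd : 0 < d) (l l' : ℕ) (hl : 1 ≤ l) (hl' : 1 ≤ l')
    (a : Fin l → ℝ) (ha : ∀ j, a j ≤ 0) (e : Fin l' → ℝ) (he : ∀ k, 1 ≤ e k)
    (r : Fin l → ℝ) (hr : ∀ j, 0 < r j) (s : Fin l' → ℝ) (hs : ∀ k, 0 < s k)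
    (hsum : ∑ k : Fin l', s k = ∑ j : Fin l, r j + 1)
    (hdeg : ∑ k : Fin l', (1 - e k) * s k - ∑ j : Fin l, a j * r j = d)
    (f : ℝ → ℝ)
    (hf : ∀ x : ℝ, f x =
      if x < 0 then 0
      else if x ≤ 1 then d * x
      else ∑ j : Fin l, r j * max 0 (-(a j + d * (x - 1)))
        - ∑ k : Fin l', s k * max 0 (-((1 - e k) + d * (x - 1))))
    (ξ : ℂ) (hξ : ξ ≠ 0) :
    Integrable f ∧
      ∫ x : ℝ, (f x : ℂ) * Complex.exp (-(Complex.I * x * ξ)) =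
        -((d : ℂ) / ξ ^ 2) *
          (∑ j : Fin l, (r j : ℂ) * Complex.exp (-(Complex.I * (1 - (a j : ℂ) / d) * ξ))
            - ∑ k : Fin l', (s k : ℂ) *
                Complex.exp (-(Complex.I * (1 - (1 - (e k : ℂ)) / d) * ξ))
            + 1) := by
  have hd0 : (d : ℂ) ≠ 0 := by exact_mod_cast ne_of_gt hd
  -- `P t` is `c - x` on `(1, c]` with `c = 1 - t / d`; every kink of `f` past `1` comes from one.
  let P (t : ℝ) : ℝ → ℝ := affinePiece (1 - t / d) (-1) 1 (1 - t / d)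
  have hfP : f = fun x => d * affinePiece 0 1 0 1 x
      + ∑ j, r j * d * P (a j) x - ∑ k, s k * d * P (1 - e k) x := by
    funext x
    rw [hf]
    rcases lt_or_ge 1 x with h1 | h1
    · rw [if_neg (by linarith), if_neg (by linarith), affinePiece,
        Set.indicator_of_notMem (fun h => absurd h.2 h1.not_ge)]
      simp only [hinge_eq_affinePiece hd _ h1, P, mul_assoc]
      ring
    · simp only [P, affinePiece_of_le _ _ _ h1, mul_zero, Finset.sum_const_zero]
      rcases lt_or_ge x 0 with h0 | h0
      · rw [if_pos h0, affinePiece_of_le _ _ _ h0.le]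
        ring
      · rw [if_neg h0.not_gt, if_pos h1]
        rcases h0.eq_or_lt with rfl | h0
        · simp [affinePiece]
        · rw [affinePiece, Set.indicator_of_mem (Set.mem_Ioc.2 ⟨h0, h1⟩)]
          ring
  refine ⟨?_, ?_⟩
  · rw [hfP]
    exact (((integrable_affinePiece _ _ _ _).const_mul _).add
      (integrable_finsetSum _ fun j _ => (integrable_affinePiece _ _ _ _).const_mul _)).sub
      (integrable_finsetSum _ fun k _ => (integrable_affinePiece _ _ _ _).const_mul _)
  obtain ⟨w, hw⟩ : ∃ w : ℂ, w = -(Complex.I * ξ) := ⟨_, rfl⟩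
  have hw0 : w ≠ 0 := by simp [hw, hξ]
  have hw2 : ξ ^ 2 = -w ^ 2 := by rw [hw, neg_sq, mul_pow, Complex.I_sq]; ring
  have hE (z : ℂ) : -(Complex.I * z * ξ) = w * z := by rw [hw]; ring
  have hP (t : ℝ) (ht : t ≤ 0) : ∫ x : ℝ, (P t x : ℂ) * Complex.exp (w * x) =
      Complex.exp (w * (1 - (t : ℂ) / d)) / w ^ 2 - Complex.exp w / w ^ 2
        + (t : ℂ) / d * (Complex.exp w / w) := by
    have h1 : 1 ≤ 1 - t / d := by
      have := div_nonpos_of_nonpos_of_nonneg ht hd.le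
      linarith
    simp only [P]
    rw [integral_affinePiece _ _ h1 hw0]
    push_cast
    rw [mul_one w]
    ring
  have hlin : ∫ x : ℝ, (affinePiece 0 1 0 1 x : ℂ) * Complex.exp (w * x) =
      Complex.exp w / w - Complex.exp w / w ^ 2 + 1 / w ^ 2 := by
    rw [integral_affinePiece _ _ zero_le_one hw0]
    push_cast
    rw [mul_one w, mul_zero w, Complex.exp_zero]
    ring
  have hint (t : ℝ) : Integrable fun x : ℝ => (P t x : ℂ) * Complex.exp (w * x) :=
    integrable_affinePiece_mul_exp _ _ _ _ w
  have hexpand : ∫ x : ℝ, (f x : ℂ) * Complex.exp (w * x) =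
      d * (∫ x : ℝ, (affinePiece 0 1 0 1 x : ℂ) * Complex.exp (w * x))
        + ∑ j, (r j : ℂ) * d * (∫ x : ℝ, (P (a j) x : ℂ) * Complex.exp (w * x))
        - ∑ k, (s k : ℂ) * d * (∫ x : ℝ, (P (1 - e k) x : ℂ) * Complex.exp (w * x)) := by
    have hI0 := (integrable_affinePiece_mul_exp 0 1 0 1 w).const_mul (d : ℂ)
    have hIr := integrable_finsetSum Finset.univ fun j _ =>
      (hint (a j)).const_mul ((r j : ℂ) * d)
    have hIs := integrable_finsetSum Finset.univ fun k _ =>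
      (hint (1 - e k)).const_mul ((s k : ℂ) * d)
    simp only [← integral_const_mul]
    rw [← integral_finsetSum _ fun j _ => (hint (a j)).const_mul _,
      ← integral_finsetSum _ fun k _ => (hint (1 - e k)).const_mul _,
      ← integral_add hI0 hIr]
    refine Eq.trans ?_ (integral_sub (hI0.add hIr) hIs)
    congr 1
    funext x
    rw [hfP]
    push_cast
    simp only [sub_mul, add_mul, Finset.sum_mul, mul_assoc]
  have hsumC : ∑ k, (s k : ℂ) = ∑ j, (r j : ℂ) + 1 := by exact_mod_cast hsum
  have hdegC : ∑ k, (1 - (e k : ℂ)) * s k - ∑ j, (a j : ℂ) * r j = d := by exact_mod_cast hdeg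
  have hR : ∑ j, (r j : ℂ) * d * ∫ x : ℝ, (P (a j) x : ℂ) * Complex.exp (w * x) =
      d / w ^ 2 * ∑ j, (r j : ℂ) * Complex.exp (w * (1 - (a j : ℂ) / d))
        - d * (Complex.exp w / w ^ 2) * ∑ j, (r j : ℂ)
        + Complex.exp w / w * ∑ j, (a j : ℂ) * r j := by
    simp only [Finset.mul_sum, ← Finset.sum_sub_distrib, ← Finset.sum_add_distrib]
    refine Finset.sum_congr rfl fun j _ => ?_
    rw [hP _ (ha j)]
    field_simp
  have hS : ∑ k, (s k : ℂ) * d * ∫ x : ℝ, (P (1 - e k) x : ℂ) * Complex.exp (w * x) =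
      d / w ^ 2 * ∑ k, (s k : ℂ) * Complex.exp (w * (1 - (1 - (e k : ℂ)) / d))
        - d * (Complex.exp w / w ^ 2) * ∑ k, (s k : ℂ)
        + Complex.exp w / w * ∑ k, (1 - (e k : ℂ)) * s k := by
    simp only [Finset.mul_sum, ← Finset.sum_sub_distrib, ← Finset.sum_add_distrib]
    refine Finset.sum_congr rfl fun k _ => ?_
    rw [hP _ (by linarith [he k])]
    push_cast
    field_simp
  simp only [hE]
  rw [hexpand, hlin, hR, hS, hw2, div_neg, neg_neg]
  -- What remains are the terms from the breakpoint `1`; their coefficients are `hsumC`, `hdegC`.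
  linear_combination d * (Complex.exp w / w ^ 2) * hsumC - Complex.exp w / w * hdegC
end
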